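/- For n ≥ 0 and α > -1, ∫_{-1}^1 x · P̃_n^{(α,α)}(x) · (P̃_n^{(α,α)})'(x) · (1-x²)^α dx = n, where P̃_n^{(α,α)} is the Jacobi polynomial normalized to have unit norm in L²([-1,1],(1-x²)^α). -/

import Mathlib

open Real MeasureTheory

/-- The Jacobi polynomial `P_n^{(α,α)}`, defined through the three-term recurrence
`P_{k+1}(x) = A_k x P_k(x) - C_k P_{k-1}(x)` (the middle coefficient `B_k` vanishes
when `β = α`). -/
noncomputable def jacobiP (α : ℝ) : ℕ → ℝ → ℝ
  | 0, _ => 1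
  | 1, x => (α + 1) * x
  | (n + 2), x =>
      ((2 * ((n : ℝ) + 1) + 2 * α + 1) * (2 * ((n : ℝ) + 1) + 2 * α + 2) /
          (2 * ((n : ℝ) + 2) * (((n : ℝ) + 1) + 2 * α + 1)) * x) * jacobiP α (n + 1) x -
        (((n : ℝ) + 1 + α) ^ 2 * (2 * ((n : ℝ) + 1) + 2 * α + 2) /
          (((n : ℝ) + 2) * (((n : ℝ) + 1) + 2 * α + 1) * (2 * ((n : ℝ) + 1) + 2 * α))) *
          jacobiP α n x

/-- The squared weighted `L²` norm `h_n^{(α,α)}` of the Jacobi polynomial `P_n^{(α,α)}`. -/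
noncomputable def jacobiH (α : ℝ) (n : ℕ) : ℝ :=
  (2 : ℝ) ^ (2 * α + 1) * Real.Gamma (n + α + 1) ^ 2 /
    (n.factorial * (2 * n + 2 * α + 1) * Real.Gamma (n + 2 * α + 1))

/-- The normalized Jacobi polynomial `P̃_n^{(α,α)}`, with unit norm in
`L²([-1,1], (1-x²)^α dx)`. -/
noncomputable def normJacobiP (α : ℝ) (n : ℕ) (x : ℝ) : ℝ :=
  jacobiP α n x / Real.sqrt (jacobiH α n)

open Polynomial

/-- The Jacobi polynomial `P_n^{(α,α)}` as an element of `ℝ[X]`. -/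
noncomputable def jacobiPoly (α : ℝ) : ℕ → ℝ[X]
  | 0 => 1
  | 1 => C (α + 1) * X
  | (n + 2) =>
      C ((2 * ((n : ℝ) + 1) + 2 * α + 1) * (2 * ((n : ℝ) + 1) + 2 * α + 2) /
          (2 * ((n : ℝ) + 2) * (((n : ℝ) + 1) + 2 * α + 1))) * X * jacobiPoly α (n + 1) -
        C (((n : ℝ) + 1 + α) ^ 2 * (2 * ((n : ℝ) + 1) + 2 * α + 2) /
          (((n : ℝ) + 2) * (((n : ℝ) + 1) + 2 * α + 1) * (2 * ((n : ℝ) + 1) + 2 * α))) *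
          jacobiPoly α n

theorem eval_jacobiPoly (α : ℝ) (n : ℕ) (x : ℝ) : (jacobiPoly α n).eval x = jacobiP α n x := by
  induction n using Nat.twoStepInduction with
  | zero => simp [jacobiPoly, jacobiP]
  | one => simp [jacobiPoly, jacobiP]
  | more n ih₀ ih₁ => simp [jacobiPoly, jacobiP, ih₀, ih₁]

theorem degree_jacobiPoly {α : ℝ} (hα : -1 < α) (n : ℕ) : (jacobiPoly α n).degree = n := by
  induction n using Nat.twoStepInduction with
  | zero => simp [jacobiPoly]
  | one => simpa [jacobiPoly] using degree_C_mul_X (by linarith : α + 1 ≠ 0)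
  | more n ih₀ ih₁ =>
    have hn : (0 : ℝ) ≤ n := n.cast_nonneg
    have h₁ : 0 < 2 * ((n : ℝ) + 1) + 2 * α + 1 := by linarith
    have h₂ : 0 < 2 * ((n : ℝ) + 1) + 2 * α + 2 := by linarith
    have h₃ : 0 < (n : ℝ) + 1 + 2 * α + 1 := by linarith
    have hlead (c : ℝ) (hc : c ≠ 0) : (C c * X * jacobiPoly α (n + 1)).degree = ((n + 2 : ℕ) : WithBot ℕ) := by
      rw [degree_mul, degree_C_mul_X hc, ih₁]
      norm_cast
      rw [add_comm]
    rw [jacobiPoly, degree_sub_eq_left_of_degree_lt, hlead _ (by positivity)]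
    rw [hlead _ (by positivity)]
    refine (degree_mul_le _ _).trans_lt ((add_le_add_left degree_C_le _).trans_lt ?_)
    rw [ih₀, zero_add]
    exact_mod_cast (by omega : n < n + 2)

/-- The three-term recurrence with denominators cleared. -/
theorem jacobiPoly_recurrence {α : ℝ} (hα : -1 < α) (n : ℕ) :
    C (((n : ℝ) + 2) * (n + 2 * α + 2)) * jacobiPoly α (n + 2) =
      C ((2 * n + 2 * α + 3) * (n + α + 2)) * X * jacobiPoly α (n + 1) -
        C ((n + 1 + α) * (n + α + 2)) * jacobiPoly α n := by
  have hn : (0 : ℝ) ≤ n := n.cast_nonneg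
  have h₁ : (n : ℝ) + 1 + 2 * α + 1 ≠ 0 := by linarith
  have h₂ : 2 * ((n : ℝ) + 1) + 2 * α ≠ 0 := by linarith
  have h₃ : (n : ℝ) + 2 ≠ 0 := by linarith
  rw [jacobiPoly, mul_sub, ← mul_assoc, ← mul_assoc, ← mul_assoc, ← C_mul, ← C_mul]
  congr 1
  · congr 3
    field_simp
    ring
  · congr 2
    field_simp
    ring

/-- The relations expressing `(1 - X²) P_k'` through `X P_k` and a neighbour of `P_k`. -/
theorem jacobiPoly_derivative_relations {α : ℝ} (hα : -1 < α) (n : ℕ) :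
    (1 - X ^ 2) * derivative (jacobiPoly α (n + 1)) =
        -(C ((n : ℝ) + 1) * X * jacobiPoly α (n + 1)) + C ((n : ℝ) + 1 + α) * jacobiPoly α n ∧
      C ((n : ℝ) + 1 + α) * ((1 - X ^ 2) * derivative (jacobiPoly α n)) =
        C ((n + 2 * α + 1) * (n + α + 1)) * X * jacobiPoly α n -
          C (((n : ℝ) + 1) * (n + 2 * α + 1)) * jacobiPoly α (n + 1) := by
  induction n with
  | zero =>
    constructor
    · simp [jacobiPoly]
      ring
    · simp [jacobiPoly]
      ring
  | succ n ih =>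
    obtain ⟨hlower, hraise⟩ := ih
    have hrec := jacobiPoly_recurrence hα n
    have hn : (0 : ℝ) ≤ n := n.cast_nonneg
    have hc : ((n : ℝ) + 2) * (n + 2 * α + 2) ≠ 0 :=
      mul_ne_zero (by linarith) (by linarith)
    have hder := congrArg derivative hrec
    simp only [derivative_mul, derivative_sub, derivative_C, derivative_X] at hder
    constructor
    · apply mul_left_cancel₀ (C_ne_zero.mpr hc)
      simp only [C_mul, C_add, C_1, map_natCast, C_ofNat, Nat.cast_add, Nat.cast_one]
        at hder hrec hlower hraise ⊢
      linear_combination (1 - X ^ 2) * hder + (n + 2) * X * hrec +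
        (2 * n + 2 * C α + 3) * (n + C α + 2) * X * hlower - (n + C α + 2) * hraise
    · simp only [C_mul, C_add, C_1, map_natCast, C_ofNat, Nat.cast_add, Nat.cast_one]
        at hrec hlower ⊢
      linear_combination (n + C α + 2) * hlower + hrec

/-- The Gegenbauer differential equation. -/
theorem jacobiPoly_ode {α : ℝ} (hα : -1 < α) (n : ℕ) :
    (1 - X ^ 2) * derivative (derivative (jacobiPoly α n)) -
        C (2 * (α + 1)) * X * derivative (jacobiPoly α n) =
      -(C ((n : ℝ) * (n + 2 * α + 1)) * jacobiPoly α n) := by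
  cases n with
  | zero => simp [jacobiPoly]
  | succ n =>
    obtain ⟨hlower, hraise⟩ := jacobiPoly_derivative_relations hα n
    have hX : (1 - X ^ 2 : ℝ[X]) ≠ 0 := fun h => by
      simpa using congrArg (eval 0) h
    have hder := congrArg derivative hlower
    simp only [derivative_mul, derivative_add, derivative_neg, derivative_sub, derivative_C,
      derivative_X, derivative_one, derivative_X_pow] at hder
    apply mul_left_cancel₀ hX
    simp only [C_mul, C_add, C_1, map_natCast, C_ofNat, Nat.cast_add, Nat.cast_one,
      Nat.cast_ofNat] at hder hlower hraise ⊢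
    linear_combination (1 - X ^ 2) * hder + hraise - (n + 1 + 2 * C α) * X * hlower

theorem intervalIntegrable_one_sub_sq_rpow {α : ℝ} (hα : -1 < α) :
    IntervalIntegrable (fun x : ℝ => (1 - x ^ 2) ^ α) volume (-1) 1 := by
  have hright : IntervalIntegrable (fun x : ℝ => (1 - x ^ 2) ^ α) volume 0 1 := by
    have h₁ : IntervalIntegrable (fun x : ℝ => (1 - x) ^ α) volume 0 1 := by
      simpa using ((intervalIntegral.intervalIntegrable_rpow' (a := 0) (b := 1) hα).comp_sub_left
        1).symm
    have h₂ : ContinuousOn (fun x : ℝ => (1 + x) ^ α) (Set.uIcc 0 1) := by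
      refine ContinuousOn.rpow_const (by fun_prop) fun x hx => Or.inl ?_
      rw [Set.uIcc_of_le zero_le_one] at hx
      linarith [hx.1]
    refine (h₁.mul_continuousOn h₂).congr fun x hx => ?_
    rw [Set.uIoc_of_le zero_le_one] at hx
    rw [← mul_rpow (by linarith [hx.2]) (by linarith [hx.1])]
    ring_nf
  have hleft := (IntervalIntegrable.iff_comp_neg (by simp)).mp hright
  simp only [neg_sq, neg_zero] at hleft
  exact hleft.symm.trans hright

theorem intervalIntegrable_eval_mul_weight {α : ℝ} (hα : -1 < α) (p : ℝ[X]) :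
    IntervalIntegrable (fun x : ℝ => p.eval x * (1 - x ^ 2) ^ α) volume (-1) 1 :=
  (intervalIntegrable_one_sub_sq_rpow hα).continuousOn_mul p.continuous.continuousOn

/-- Integration of polynomials against the weight `(1 - x²)^α` on `[-1, 1]`. -/
noncomputable def weightIntegral {α : ℝ} (hα : -1 < α) : ℝ[X] →ₗ[ℝ] ℝ where
  toFun p := ∫ x in (-1 : ℝ)..1, p.eval x * (1 - x ^ 2) ^ α
  map_add' p q := by
    simp only [eval_add, add_mul]
    exact intervalIntegral.integral_add (intervalIntegrable_eval_mul_weight hα p)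
      (intervalIntegrable_eval_mul_weight hα q)
  map_smul' c p := by
    simp only [eval_smul, smul_eq_mul, mul_assoc, intervalIntegral.integral_const_mul,
      RingHom.id_apply]

theorem weightIntegral_apply {α : ℝ} (hα : -1 < α) (p : ℝ[X]) :
    weightIntegral hα p = ∫ x in (-1 : ℝ)..1, p.eval x * (1 - x ^ 2) ^ α := rfl

theorem weightIntegral_C_mul {α : ℝ} (hα : -1 < α) (c : ℝ) (p : ℝ[X]) :
    weightIntegral hα (C c * p) = c * weightIntegral hα p := by
  rw [← smul_eq_C_mul, map_smul, smul_eq_mul]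

theorem weightIntegral_by_parts {α : ℝ} (hα : -1 < α) (q : ℝ[X]) :
    weightIntegral hα ((1 - X ^ 2) * derivative q - C (2 * (α + 1)) * X * q) = 0 := by
  have hcont : ContinuousOn (fun x : ℝ => (1 - x ^ 2) ^ (α + 1) * q.eval x) (Set.Icc (-1) 1) :=
    (ContinuousOn.rpow_const (by fun_prop) fun x _ => Or.inr (by linarith)).mul
      q.continuous.continuousOn
  rw [weightIntegral_apply, intervalIntegral.integral_eq_sub_of_hasDerivAt_of_le (by norm_num)
    hcont _ (intervalIntegrable_eval_mul_weight hα _)]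
  · simp [zero_rpow (by linarith : α + 1 ≠ 0)]
  · intro x hx
    have hpos : 0 < 1 - x ^ 2 := by nlinarith [hx.1, hx.2]
    have hbase : HasDerivAt (fun x : ℝ => 1 - x ^ 2) (-(2 * x)) x := by
      simpa using (hasDerivAt_pow 2 x).const_sub 1
    refine ((hbase.rpow_const (p := α + 1) (Or.inl hpos.ne')).mul (q.hasDerivAt x)).congr_deriv ?_
    rw [add_sub_cancel_right, rpow_add_one hpos.ne']
    simp
    ring

theorem weightIntegral_one {α : ℝ} (hα : -1 < α) :
    weightIntegral hα 1 = 2 ^ (2 * α + 1) * Real.Gamma (α + 1) ^ 2 / Real.Gamma (2 * α + 2) := by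
  have hbeta := Complex.betaIntegral_scaled ((α + 1 : ℝ) : ℂ) ((α + 1 : ℝ) : ℂ) two_pos
  rw [Complex.betaIntegral_eq_Gamma_mul_div _ _ (by simpa using by linarith)
    (by simpa using by linarith)] at hbeta
  have hleft : ∫ x in (0 : ℝ)..2, (x : ℂ) ^ (((α + 1 : ℝ) : ℂ) - 1) *
      (((2 : ℝ) : ℂ) - x) ^ (((α + 1 : ℝ) : ℂ) - 1) =
        ((∫ x in (0 : ℝ)..2, x ^ α * (2 - x) ^ α : ℝ) : ℂ) := by
    rw [← intervalIntegral.integral_ofReal]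
    refine intervalIntegral.integral_congr fun x hx => ?_
    rw [Set.uIcc_of_le zero_le_two] at hx
    rw [Complex.ofReal_mul, Complex.ofReal_cpow hx.1, Complex.ofReal_cpow (by linarith [hx.2])]
    simp
  rw [hleft, ← Complex.ofReal_add, Complex.Gamma_ofReal, Complex.Gamma_ofReal,
    ← Complex.ofReal_one, ← Complex.ofReal_sub, ← Complex.ofReal_cpow zero_le_two] at hbeta
  norm_cast at hbeta
  have hshift : weightIntegral hα 1 = ∫ x in (0 : ℝ)..2, x ^ α * (2 - x) ^ α := by
    have h := intervalIntegral.integral_comp_add_right (a := -1) (b := 1)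
      (fun x : ℝ => x ^ α * (2 - x) ^ α) 1
    norm_num at h
    rw [← h, weightIntegral_apply]
    refine intervalIntegral.integral_congr fun x hx => ?_
    rw [Set.uIcc_of_le (by norm_num)] at hx
    rw [← mul_rpow (by linarith [hx.1]) (by linarith [hx.2]), eval_one, one_mul]
    ring_nf
  rw [hshift, hbeta]
  ring_nf

theorem weightIntegral_jacobiPoly_mul_of_ne {α : ℝ} (hα : -1 < α) {m n : ℕ} (hmn : m ≠ n) :
    weightIntegral hα (jacobiPoly α m * jacobiPoly α n) = 0 := by
  have hsturm (k l : ℕ) : ((k : ℝ) * (k + 2 * α + 1)) *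
      weightIntegral hα (jacobiPoly α k * jacobiPoly α l) = weightIntegral hα
        ((1 - X ^ 2) * derivative (jacobiPoly α k) * derivative (jacobiPoly α l)) := by
    have h := weightIntegral_by_parts hα (derivative (jacobiPoly α k) * jacobiPoly α l)
    have hsplit : (1 - X ^ 2) * derivative (derivative (jacobiPoly α k) * jacobiPoly α l) -
        C (2 * (α + 1)) * X * (derivative (jacobiPoly α k) * jacobiPoly α l) =
          (1 - X ^ 2) * derivative (jacobiPoly α k) * derivative (jacobiPoly α l) -
            C ((k : ℝ) * (k + 2 * α + 1)) * (jacobiPoly α k * jacobiPoly α l) := by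
      rw [derivative_mul]
      linear_combination jacobiPoly α l * jacobiPoly_ode hα k
    rw [hsplit, map_sub, weightIntegral_C_mul] at h
    linarith
  have h₁ := hsturm m n
  have h₂ := hsturm n m
  rw [mul_comm (jacobiPoly α n), mul_right_comm (1 - X ^ 2)] at h₂
  have hprod : (((m : ℝ) - n) * (m + n + 2 * α + 1)) *
      weightIntegral hα (jacobiPoly α m * jacobiPoly α n) = 0 := by
    linear_combination h₁ - h₂
  refine (mul_eq_zero.mp hprod).resolve_left (mul_ne_zero ?_ ?_)
  · exact sub_ne_zero.mpr (by exact_mod_cast hmn)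
  · have : (1 : ℝ) ≤ m + n := by exact_mod_cast (by omega : 1 ≤ m + n)
    linarith

theorem weightIntegral_mul_jacobiPoly_of_degree_lt {α : ℝ} (hα : -1 < α) {n : ℕ} {q : ℝ[X]}
    (hq : q.degree < n) : weightIntegral hα (q * jacobiPoly α n) = 0 := by
  let S : Polynomial.Sequence ℝ := ⟨jacobiPoly α, degree_jacobiPoly hα⟩
  have hspan := S.span_degreeLT (m := n) fun i _ =>
    (leadingCoeff_ne_zero.mpr (S.ne_zero i)).isUnit
  have hmem : q ∈ Submodule.span ℝ (S '' Set.Iio n) := hspan ▸ mem_degreeLT.mpr hq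
  clear hq
  induction hmem using Submodule.span_induction with
  | mem p hp =>
    obtain ⟨m, hm, rfl⟩ := hp
    exact weightIntegral_jacobiPoly_mul_of_ne hα (ne_of_lt hm)
  | zero => simp
  | add p r _ _ hp hr => rw [add_mul, map_add, hp, hr, add_zero]
  | smul c p _ hp => rw [smul_mul_assoc, map_smul, hp, smul_zero]

theorem weightIntegral_X_mul_derivative {α : ℝ} (hα : -1 < α) (n : ℕ) :
    weightIntegral hα (X * derivative (jacobiPoly α n) * jacobiPoly α n) =
      n * weightIntegral hα (jacobiPoly α n * jacobiPoly α n) := by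
  have hdeg : (X * derivative (jacobiPoly α n) - C (n : ℝ) * jacobiPoly α n).degree <
      (n : WithBot ℕ) := by
    rw [degree_lt_iff_coeff_zero]
    intro m hm
    rw [coeff_sub, coeff_C_mul]
    rcases hm.eq_or_lt with rfl | hlt
    · cases n with
      | zero => simp
      | succ k => rw [coeff_X_mul, coeff_derivative]; push_cast; ring
    · have hzero : (jacobiPoly α n).coeff m = 0 :=
        coeff_eq_zero_of_degree_lt (by rw [degree_jacobiPoly hα]; exact_mod_cast hlt)
      cases m with
      | zero => omega
      | succ k => rw [coeff_X_mul, coeff_derivative, hzero]; ring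
  have h := weightIntegral_mul_jacobiPoly_of_degree_lt hα hdeg
  rw [sub_mul, mul_assoc (C _), map_sub, weightIntegral_C_mul] at h
  linarith

theorem weightIntegral_jacobiPoly_sq_succ {α : ℝ} (hα : -1 < α) (n : ℕ) :
    weightIntegral hα (jacobiPoly α (n + 1) * jacobiPoly α (n + 1)) = jacobiH α (n + 1) := by
  induction n with
  | zero =>
    have h := weightIntegral_by_parts hα X
    have hsplit : ((1 - X ^ 2) * derivative X - C (2 * (α + 1)) * X * X : ℝ[X]) =
        1 - C (2 * α + 3) * (X * X) := by
      simp only [derivative_X, C_mul, C_add, C_1, C_ofNat]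
      ring
    rw [hsplit, map_sub, weightIntegral_C_mul, weightIntegral_one] at h
    have hsq : jacobiPoly α 1 * jacobiPoly α 1 = C ((α + 1) ^ 2) * (X * X) := by
      rw [jacobiPoly, C_pow]
      ring
    have h₁ : 2 * α + 3 ≠ 0 := by linarith
    have hG : Real.Gamma (2 * α + 2) ≠ 0 := (Real.Gamma_pos_of_pos (by linarith)).ne'
    have hGs : Real.Gamma (α + 1 + 1) = (α + 1) * Real.Gamma (α + 1) :=
      Real.Gamma_add_one (by linarith)
    rw [zero_add, hsq, weightIntegral_C_mul, jacobiH,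
      show ((1 : ℕ) : ℝ) + α + 1 = α + 1 + 1 by push_cast; ring,
      show ((1 : ℕ) : ℝ) + 2 * α + 1 = 2 * α + 2 by push_cast; ring,
      show 2 * ((1 : ℕ) : ℝ) + 2 * α + 1 = 2 * α + 3 by push_cast; ring, hGs,
      Nat.factorial_one, Nat.cast_one, one_mul, eq_div_iff (mul_ne_zero h₁ hG)]
    rw [sub_eq_zero, div_eq_iff hG] at h
    linear_combination -(α + 1) ^ 2 * h
  | succ n ih =>
    have hn : (0 : ℝ) ≤ n := n.cast_nonneg
    have hrec (k l : ℕ) : ((k : ℝ) + 2) * (k + 2 * α + 2) *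
        weightIntegral hα (jacobiPoly α (k + 2) * jacobiPoly α l) =
          (2 * k + 2 * α + 3) * (k + α + 2) *
              weightIntegral hα (X * jacobiPoly α (k + 1) * jacobiPoly α l) -
            (k + 1 + α) * (k + α + 2) *
              weightIntegral hα (jacobiPoly α k * jacobiPoly α l) := by
      rw [← weightIntegral_C_mul, ← weightIntegral_C_mul, ← weightIntegral_C_mul, ← map_sub,
        ← mul_assoc, jacobiPoly_recurrence hα]
      congr 1
      ring
    have hsq := hrec n (n + 2)
    have hcross := hrec (n + 1) (n + 1)
    rw [weightIntegral_jacobiPoly_mul_of_ne hα (by omega : n ≠ n + 2)] at hsq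
    rw [weightIntegral_jacobiPoly_mul_of_ne hα (by omega : n + 1 + 2 ≠ n + 1), ih] at hcross
    rw [show X * jacobiPoly α (n + 1 + 1) * jacobiPoly α (n + 1) =
      X * jacobiPoly α (n + 1) * jacobiPoly α (n + 2) by ring] at hcross
    push_cast at hcross
    have h₁ : (n : ℝ) + 2 ≠ 0 := by linarith
    have h₂ : (n : ℝ) + 2 * α + 2 ≠ 0 := by linarith
    have h₃ : 2 * ((n : ℝ) + α) + 3 ≠ 0 := by linarith
    have h₄ : 2 * ((n : ℝ) + α) + 5 ≠ 0 := by linarith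
    have h₅ : (n : ℝ) + α + 3 ≠ 0 := by linarith
    have hG : Real.Gamma (n + 2 * α + 2) ≠ 0 := (Real.Gamma_pos_of_pos (by linarith)).ne'
    have hfac : ((n + 1).factorial : ℝ) ≠ 0 := by exact_mod_cast (n + 1).factorial_ne_zero
    have hG₁ : Real.Gamma (n + α + 2 + 1) = (n + α + 2) * Real.Gamma (n + α + 2) :=
      Real.Gamma_add_one (by linarith)
    have hG₂ : Real.Gamma (n + 2 * α + 2 + 1) = (n + 2 * α + 2) * Real.Gamma (n + 2 * α + 2) :=
      Real.Gamma_add_one h₂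
    have hH : (n + 2) * (n + 2 * α + 2) * (2 * n + 2 * α + 5) * jacobiH α (n + 1 + 1) =
        (n + α + 2) ^ 2 * (2 * n + 2 * α + 3) * jacobiH α (n + 1) := by
      rw [jacobiH, jacobiH, Nat.factorial_succ (n + 1)]
      push_cast
      rw [show (n : ℝ) + 1 + 1 + α + 1 = n + α + 2 + 1 by ring,
        show (n : ℝ) + 1 + 1 + 2 * α + 1 = n + 2 * α + 2 + 1 by ring,
        show (n : ℝ) + 1 + α + 1 = n + α + 2 by ring,
        show (n : ℝ) + 1 + 2 * α + 1 = n + 2 * α + 2 by ring,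
        show 2 * ((n : ℝ) + 1 + 1) + 2 * α + 1 = 2 * n + 2 * α + 5 by ring,
        show 2 * ((n : ℝ) + 1) + 2 * α + 1 = 2 * n + 2 * α + 3 by ring,
        show (n : ℝ) + 1 + 1 = n + 2 by ring, hG₁, hG₂]
      field_simp
    apply mul_left_cancel₀ (mul_ne_zero (mul_ne_zero (mul_ne_zero h₁ h₂) h₄) h₅)
    linear_combination (2 * n + 2 * α + 5) * (n + α + 3) * hsq -
      (2 * n + 2 * α + 3) * (n + α + 2) * hcross - (n + α + 3) * hH

theorem jacobiH_succ_pos {α : ℝ} (hα : -1 < α) (n : ℕ) : 0 < jacobiH α (n + 1) := by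
  have hn : (0 : ℝ) ≤ n := n.cast_nonneg
  rw [jacobiH]
  push_cast
  have h₁ : 0 < Real.Gamma ((n : ℝ) + 1 + α + 1) := Real.Gamma_pos_of_pos (by linarith)
  have h₂ : 0 < Real.Gamma ((n : ℝ) + 1 + 2 * α + 1) := Real.Gamma_pos_of_pos (by linarith)
  have h₃ : 0 < 2 * ((n : ℝ) + 1) + 2 * α + 1 := by linarith
  have h₄ : (0 : ℝ) < (n + 1).factorial := by exact_mod_cast (n + 1).factorial_pos
  positivity

theorem F_n_zero (α : ℝ) (hα : -1 < α) (n : ℕ) :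
    ∫ x in (-1 : ℝ)..1, x * normJacobiP α n x * deriv (normJacobiP α n) x * (1 - x ^ 2) ^ α =
      (n : ℝ) := by
  have hfun : normJacobiP α n = fun x => (jacobiPoly α n).eval x / √(jacobiH α n) := by
    funext x
    rw [normJacobiP, eval_jacobiPoly]
  have hderiv (x : ℝ) : deriv (normJacobiP α n) x =
      (derivative (jacobiPoly α n)).eval x / √(jacobiH α n) := by
    rw [hfun, deriv_div_const, Polynomial.deriv]
  cases n with
  | zero => simp [hderiv, jacobiPoly]
  | succ n =>
    have hpos := jacobiH_succ_pos hα n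
    have hscale (x : ℝ) : x * normJacobiP α (n + 1) x * deriv (normJacobiP α (n + 1)) x *
        (1 - x ^ 2) ^ α = (jacobiH α (n + 1))⁻¹ *
          ((X * derivative (jacobiPoly α (n + 1)) * jacobiPoly α (n + 1)).eval x *
            (1 - x ^ 2) ^ α) := by
      rw [hderiv, hfun]
      simp only [eval_mul, eval_X]
      rw [show (jacobiH α (n + 1))⁻¹ = (√(jacobiH α (n + 1)))⁻¹ * (√(jacobiH α (n + 1)))⁻¹ by
        rw [← mul_inv, mul_self_sqrt hpos.le]]
      ring
    simp only [hscale]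
    rw [intervalIntegral.integral_const_mul, ← weightIntegral_apply hα,
      weightIntegral_X_mul_derivative, weightIntegral_jacobiPoly_sq_succ]
    field_simp
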